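/- Let k ≥ 1, π ∈ (0,1), and let (X_n)_{n≥1} be the process T(k,π) with an arbitrary initial distribution on {0,1}^k. Then with probability one the following holds: for every binary word u with 1 ≤ |u| ≤ k, lim_{t→∞} ν_t(u)/(t − |u|) = 2^{−|u|}, where ν_t(u) is the number of indices 1 ≤ i ≤ t − |u| + 1 with X_i X_{i+1} … X_{i+|u|−1} = u. -/

import Mathlib

mutual
/-- `tf0 π u` is the conditional probability `t_{k,π}(0|u)` for the two-faced
process `T(k,π)`, where `k = u.length ≥ 1` (bits: `false = 0`, `true = 1`,
words written with the most recent conditioning bit last, so `0u` is `false :: u`). -/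
noncomputable def tf0 (π : ℝ) : List Bool → ℝ
  | [] => 1 / 2
  | [false] => π
  | [true] => 1 - π
  | false :: b :: u => tf0 π (b :: u)
  | true :: b :: u => tb0 π (b :: u)

/-- `tb0 π u` is `t̄_{k,π}(0|u)` for the process `T̄(k,π)`. -/
noncomputable def tb0 (π : ℝ) : List Bool → ℝ
  | [] => 1 / 2
  | [false] => 1 - π
  | [true] => π
  | false :: b :: u => tb0 π (b :: u)
  | true :: b :: u => tf0 π (b :: u)
end

/-- `tface π w u = t_{k,π}(w|u)`, using `t(1|u) = 1 - t(0|u)`. -/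
noncomputable def tface (π : ℝ) (w : Bool) (u : List Bool) : ℝ :=
  if w then 1 - tf0 π u else tf0 π u

/-- `tbarface π w u = t̄_{k,π}(w|u)`. -/
noncomputable def tbarface (π : ℝ) (w : Bool) (u : List Bool) : ℝ :=
  if w then 1 - tb0 π u else tb0 π u

/-- XOR of the bits of a binary word. -/
def xorWord (u : List Bool) : Bool := u.foldl xor false

open MeasureTheory ProbabilityTheory Filter

/-!
By the Markov property the innovations of a fixed transition (the indicator that `v` is followed by
`w`, minus its predicted value) are orthogonal and bounded in `L²`, so almost surely their averages
tend to zero. On such a trajectory every simultaneous limit point of the word frequencies is a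
shift-invariant weight with transition probabilities `κ`. For a two-faced process the transition
probabilities to a given letter from the two words `0z` and `1z` add up to one: the weight of `zw`
is a mean, with positive coefficients, of the weights of `0z` and `1z`, and the maximum principle
forces all words of length `k` to have the same weight.
-/

section OrthogonalSums

variable {Ω : Type*} [MeasurableSpace Ω] {μ : Measure Ω}

theorem ae_tendsto_zero_of_summable_integral_sq {Y : ℕ → Ω → ℝ} (hY : ∀ n, MemLp (Y n) 2 μ)
    (hsum : Summable fun n => ∫ ω, Y n ω ^ 2 ∂μ) :
    ∀ᵐ ω ∂μ, Tendsto (Y · ω) atTop (nhds 0) := by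
  have hmeas (n : ℕ) : AEMeasurable (fun ω => ENNReal.ofReal (Y n ω ^ 2)) μ :=
    ((hY n).aestronglyMeasurable.aemeasurable.pow_const 2).ennreal_ofReal
  have hfin : ∫⁻ ω, ∑' n, ENNReal.ofReal (Y n ω ^ 2) ∂μ ≠ ⊤ := by
    rw [lintegral_tsum hmeas]
    simp_rw [← ofReal_integral_eq_lintegral_ofReal (hY _).integrable_sq
      (ae_of_all _ fun _ => sq_nonneg _)]
    exact hsum.tsum_ofReal_ne_top
  filter_upwards [ae_lt_top' (AEMeasurable.tsum hmeas) hfin] with ω hω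
  have hsq : Tendsto (fun n => Y n ω ^ 2) atTop (nhds 0) := by
    simpa only [Function.comp_def, ENNReal.toReal_ofReal (sq_nonneg _), ENNReal.toReal_zero] using
      (ENNReal.tendsto_toReal ENNReal.zero_ne_top).comp
        (ENNReal.tendsto_atTop_zero_of_tsum_ne_top hω.ne)
  rw [tendsto_zero_iff_abs_tendsto_zero]
  simpa only [Function.comp_def, Real.sqrt_sq_eq_abs, Real.sqrt_zero] using hsq.sqrt

theorem ae_tendsto_div_sq_of_integral_sq_le {T : ℕ → Ω → ℝ} {K : ℝ} (hT : ∀ m, MemLp (T m) 2 μ)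
    (hK : ∀ m, ∫ ω, T m ω ^ 2 ∂μ ≤ K * ((m : ℝ) + 1) ^ 2) :
    ∀ᵐ ω ∂μ, Tendsto (fun m : ℕ => T m ω / (m : ℝ) ^ 2) atTop (nhds 0) := by
  refine ae_tendsto_zero_of_summable_integral_sq (Y := fun m ω => T m ω / (m : ℝ) ^ 2)
    (fun m => ?_) <| ((Real.summable_one_div_nat_pow.2 one_lt_two).mul_left
      (4 * K)).of_nonneg_of_le (fun m => integral_nonneg fun ω => sq_nonneg _) fun m => ?_
  · simpa only [div_eq_mul_inv] using (hT m).mul_const (((m : ℝ) ^ 2)⁻¹)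
  have hK0 : 0 ≤ K := by
    simpa using (integral_nonneg fun ω => sq_nonneg (T 0 ω)).trans (hK 0)
  simp_rw [div_pow]
  rw [integral_div]
  obtain rfl | hm := Nat.eq_zero_or_pos m
  · simp
  have hm' : (1 : ℝ) ≤ m := mod_cast hm
  calc (∫ ω, T m ω ^ 2 ∂μ) / ((m : ℝ) ^ 2) ^ 2
      ≤ K * ((m : ℝ) + m) ^ 2 / ((m : ℝ) ^ 2) ^ 2 := by grw [hK m, hm']
    _ = 4 * K * (1 / (m : ℝ) ^ 2) := by field_simp; ring

theorem integral_sq_sum_of_orthogonal {ι : Type*} {D : ι → Ω → ℝ} (hD : ∀ i, MemLp (D i) 2 μ)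
    (horth : Pairwise fun i j => ∫ ω, D i ω * D j ω ∂μ = 0) (s : Finset ι) :
    ∫ ω, (∑ i ∈ s, D i ω) ^ 2 ∂μ = ∑ i ∈ s, ∫ ω, D i ω ^ 2 ∂μ := by
  have hintegrable (i j : ι) : Integrable (fun ω => D i ω * D j ω) μ :=
    (hD i).integrable_mul (hD j)
  simp_rw [sq, Finset.sum_mul_sum]
  rw [integral_finsetSum _ fun i _ => integrable_finsetSum _ fun j _ => hintegrable i j]
  refine Finset.sum_congr rfl fun i hi => ?_
  rw [integral_finsetSum _ fun j _ => hintegrable i j]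
  exact Finset.sum_eq_single_of_mem i hi fun j _ hji => horth hji.symm

theorem integral_sq_sum_abs_le {ι : Type*} {D : ι → Ω → ℝ} (hD : ∀ i, MemLp (D i) 2 μ)
    (s : Finset ι) :
    ∫ ω, (∑ i ∈ s, |D i ω|) ^ 2 ∂μ ≤ s.card * ∑ i ∈ s, ∫ ω, D i ω ^ 2 ∂μ := by
  have hintegrable (i : ι) (_ : i ∈ s) : Integrable (fun ω => D i ω ^ 2) μ := (hD i).integrable_sq
  rw [← integral_finsetSum s hintegrable, ← integral_const_mul]
  refine integral_mono (memLp_finsetSum s fun i _ => (hD i).abs).integrable_sq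
    ((integrable_finsetSum s hintegrable).const_mul _) fun ω => ?_
  simpa only [sq_abs] using sq_sum_le_card_mul_sum_sq (s := s) (f := fun i => |D i ω|)

theorem tendsto_average_of_tendsto_squares {a : ℕ → ℝ}
    (hsq : Tendsto (fun m : ℕ => (∑ i ∈ Finset.range (m ^ 2), a i) / (m : ℝ) ^ 2) atTop (nhds 0))
    (hblock : Tendsto (fun m : ℕ => (∑ i ∈ Finset.Ico (m ^ 2) ((m + 1) ^ 2), |a i|) / (m : ℝ) ^ 2)
      atTop (nhds 0)) :
    Tendsto (fun n : ℕ => (∑ i ∈ Finset.range n, a i) / (n : ℝ)) atTop (nhds 0) := by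
  have hsqrt : Tendsto Nat.sqrt atTop atTop :=
    tendsto_atTop_atTop.2 fun b => ⟨b * b, fun n hn => Nat.le_sqrt.2 hn⟩
  have hbound := (hsq.abs.add hblock).comp hsqrt
  rw [abs_zero, add_zero] at hbound
  refine squeeze_zero_norm' ?_ hbound
  filter_upwards [eventually_ge_atTop 1] with n hn
  rw [Function.comp_apply]
  set m := n.sqrt
  have hm : 0 < m := Nat.sqrt_pos.2 hn
  have hmn : m ^ 2 ≤ n := Nat.sqrt_le' n
  have hnm : n ≤ (m + 1) ^ 2 := (Nat.lt_succ_sqrt' n).le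
  have hblock_le : |∑ i ∈ Finset.Ico (m ^ 2) n, a i| ≤
      ∑ i ∈ Finset.Ico (m ^ 2) ((m + 1) ^ 2), |a i| :=
    (Finset.abs_sum_le_sum_abs _ _).trans <| Finset.sum_le_sum_of_subset_of_nonneg
      (Finset.Ico_subset_Ico_right hnm) fun _ _ _ => abs_nonneg _
  have hcast : (m : ℝ) ^ 2 ≤ n := mod_cast hmn
  rw [norm_div, Real.norm_natCast, Real.norm_eq_abs, abs_div, abs_of_nonneg (sq_nonneg (m : ℝ)),
    ← add_div, ← Finset.sum_range_add_sum_Ico _ hmn]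
  gcongr
  exact (abs_add_le _ _).trans (by gcongr)

/-- Along the squares `m ^ 2` the variances of the averages are summable, and so are those of the
oscillations between consecutive squares. -/
theorem ae_tendsto_average_of_orthogonal {D : ℕ → Ω → ℝ} {C : ℝ} (hD : ∀ i, MemLp (D i) 2 μ)
    (hC : ∀ i, ∫ ω, D i ω ^ 2 ∂μ ≤ C)
    (horth : Pairwise fun i j => ∫ ω, D i ω * D j ω ∂μ = 0) :
    ∀ᵐ ω ∂μ, Tendsto (fun n : ℕ => (∑ i ∈ Finset.range n, D i ω) / (n : ℝ)) atTop (nhds 0) := by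
  have hC0 : 0 ≤ C := (integral_nonneg fun ω => sq_nonneg (D 0 ω)).trans (hC 0)
  have hsum_le (s : Finset ℕ) : ∑ i ∈ s, ∫ ω, D i ω ^ 2 ∂μ ≤ s.card * C := by
    simpa only [nsmul_eq_mul] using Finset.sum_le_card_nsmul s _ C fun i _ => hC i
  have hsquares : ∀ᵐ ω ∂μ, Tendsto (fun m : ℕ =>
      (∑ i ∈ Finset.range (m ^ 2), D i ω) / (m : ℝ) ^ 2) atTop (nhds 0) := by
    refine ae_tendsto_div_sq_of_integral_sq_le (K := C)
      (fun m => memLp_finsetSum _ fun i _ => hD i) fun m => ?_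
    calc ∫ ω, (∑ i ∈ Finset.range (m ^ 2), D i ω) ^ 2 ∂μ ≤ (m : ℝ) ^ 2 * C := by
          rw [integral_sq_sum_of_orthogonal hD horth]
          exact (hsum_le _).trans_eq (by rw [Finset.card_range, Nat.cast_pow])
      _ ≤ C * ((m : ℝ) + 1) ^ 2 := by rw [mul_comm]; gcongr; linarith
  have hblocks : ∀ᵐ ω ∂μ, Tendsto (fun m : ℕ =>
      (∑ i ∈ Finset.Ico (m ^ 2) ((m + 1) ^ 2), |D i ω|) / (m : ℝ) ^ 2) atTop (nhds 0) := by
    refine ae_tendsto_div_sq_of_integral_sq_le (K := 4 * C)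
      (fun m => memLp_finsetSum _ fun i _ => (hD i).abs) fun m => ?_
    have hcard : ((Finset.Ico (m ^ 2) ((m + 1) ^ 2)).card : ℝ) = 2 * m + 1 := by
      rw [Nat.card_Ico, show (m + 1) ^ 2 - m ^ 2 = 2 * m + 1 by rw [add_sq]; omega]
      push_cast; rfl
    calc _ ≤ (2 * (m : ℝ) + 1) * ((2 * m + 1) * C) := by
          grw [integral_sq_sum_abs_le hD, hsum_le, hcard]
      _ ≤ 4 * C * ((m : ℝ) + 1) ^ 2 := by nlinarith [mul_nonneg m.cast_nonneg hC0 (α := ℝ)]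
  filter_upwards [hsquares, hblocks] with ω using tendsto_average_of_tendsto_squares

end OrthogonalSums

section StationaryWeights

variable {A : Type*} [Fintype A]

theorem eq_of_weighted_sum_eq_of_le {c g : A → ℝ} {M : ℝ} (hc : ∀ a, 0 < c a)
    (hsum : ∑ a, c a = 1) (hg : ∀ a, g a ≤ M) (h : ∑ a, c a * g a = M) (a : A) : g a = M := by
  have hle : ∀ a ∈ Finset.univ, c a * g a ≤ c a * M := fun a _ =>
    mul_le_mul_of_nonneg_left (hg a) (hc a).le
  have heq : ∑ a, c a * g a = ∑ a, c a * M := by rw [h, ← Finset.sum_mul, hsum, one_mul]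
  exact mul_left_cancel₀ (hc a).ne'
    ((Finset.sum_eq_sum_iff_of_le hle).1 heq a (Finset.mem_univ a))

/-- The word weights `f` are those of a stationary process whose next letter after any word `v` of
length `k` is `w` with conditional probability `κ w v`. Shift invariance is `sum_cons`; positivity
is not recorded. -/
structure IsStationaryWordWeight (k : ℕ) (κ : A → List A → ℝ) (f : List A → ℝ) : Prop where
  nil : f [] = 1
  sum_append_singleton : ∀ u, ∑ a, f (u ++ [a]) = f u
  sum_cons : ∀ u, ∑ a, f (a :: u) = f u
  append_singleton : ∀ v w, v.length = k → f (v ++ [w]) = κ w v * f v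

namespace IsStationaryWordWeight

variable {k : ℕ} {κ : A → List A → ℝ} {f : List A → ℝ}

theorem sum_transition_mul_cons (hf : IsStationaryWordWeight k κ f) {z : List A} (w : A)
    (hz : z.length + 1 = k) : ∑ a, κ w (a :: z) * f (a :: z) = f (z ++ [w]) := by
  rw [← hf.sum_cons]
  exact Finset.sum_congr rfl fun a _ => (hf.append_singleton (a :: z) w hz).symm

theorem eq_card_pow_mul_of_forall_eq (hf : IsStationaryWordWeight k κ f) {M : ℝ}
    (hM : ∀ v : List A, v.length = k → f v = M) (j : ℕ) (u : List A) (hu : u.length + j = k) :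
    f u = (Fintype.card A : ℝ) ^ j * M := by
  induction j generalizing u with
  | zero => rw [pow_zero, one_mul, hM u hu]
  | succ j ih =>
    have hterm (a : A) : f (u ++ [a]) = (Fintype.card A : ℝ) ^ j * M :=
      ih _ (by rw [List.length_append, List.length_singleton]; omega)
    rw [← hf.sum_append_singleton]
    simp only [hterm, Finset.sum_const, Finset.card_univ, nsmul_eq_mul]
    ring

variable (hpos : ∀ w v, v.length = k → 0 < κ w v)
  (hsum : ∀ w z, z.length + 1 = k → ∑ a, κ w (a :: z) = 1)
include hpos hsum

/-- By `sum_transition_mul_cons` the weight of `z w` is a weighted mean of the weights of the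
words `a z`, so a maximum is inherited by all of them: this strips `y` one letter at a time. -/
theorem eq_max_of_forall_append_eq_max (hf : IsStationaryWordWeight k κ f) {M : ℝ}
    (hmax : ∀ v : List A, v.length = k → f v ≤ M) (y : List A) (hy : y.length ≤ k)
    (h : ∀ z : List A, z.length + y.length = k → f (z ++ y) = M) :
    ∀ v : List A, v.length = k → f v = M := by
  induction y using List.reverseRecOn with
  | nil => simpa using h
  | append_singleton y w ih =>
    rw [List.length_append, List.length_singleton] at hy h
    refine ih (by omega) fun z hz => ?_
    obtain _ | ⟨a, z⟩ := z
    · rw [List.length_nil] at hz; omega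
    rw [List.length_cons] at hz
    have hlen : (z ++ y).length + 1 = k := by rw [List.length_append]; omega
    refine eq_of_weighted_sum_eq_of_le (c := fun a => κ w (a :: (z ++ y)))
      (g := fun a => f (a :: (z ++ y))) (fun a => hpos w _ hlen) (hsum w _ hlen)
      (fun a => hmax _ hlen) ?_ a
    rw [hf.sum_transition_mul_cons w hlen, List.append_assoc]
    exact h z (by omega)

theorem exists_forall_eq [Nonempty A] (hf : IsStationaryWordWeight k κ f) :
    ∃ M, ∀ v : List A, v.length = k → f v = M := by
  obtain ⟨v₀, hv₀, hmax⟩ := Set.exists_max_image {v : List A | v.length = k} f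
    (List.finite_length_eq A k) ⟨List.replicate k (Classical.arbitrary A), List.length_replicate⟩
  rw [Set.mem_ofPred_eq] at hv₀
  refine ⟨f v₀, hf.eq_max_of_forall_append_eq_max hpos hsum hmax v₀ hv₀.le fun z hz => ?_⟩
  rw [List.length_eq_zero_iff.1 (by omega : z.length = 0), List.nil_append]

theorem eq_inv_card_pow [Nonempty A] (hf : IsStationaryWordWeight k κ f) {u : List A}
    (hu : u.length ≤ k) : f u = ((Fintype.card A : ℝ) ^ u.length)⁻¹ := by
  obtain ⟨M, hM⟩ := hf.exists_forall_eq hpos hsum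
  have hone : (Fintype.card A : ℝ) ^ k * M = 1 := by
    rw [← hf.eq_card_pow_mul_of_forall_eq hM k [] (Nat.zero_add k), hf.nil]
  have hj : u.length + (k - u.length) = k := Nat.add_sub_cancel' hu
  rw [hf.eq_card_pow_mul_of_forall_eq hM _ u hj]
  refine eq_inv_of_mul_eq_one_right ?_
  rw [← mul_assoc, ← pow_add, hj, hone]

end IsStationaryWordWeight

end StationaryWeights

section Subwords

variable {A : Type*}

/-- The word of length `n` read off the sequence `y` from position `i` on. -/
def subword (y : ℕ → A) (i n : ℕ) : List A :=
  (List.range' i n).map y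

theorem length_subword (y : ℕ → A) (i n : ℕ) : (subword y i n).length = n := by
  rw [subword, List.length_map, List.length_range']

theorem subword_add (y : ℕ → A) (i m n : ℕ) :
    subword y i (m + n) = subword y i m ++ subword y (i + m) n := by
  rw [subword, ← List.range'_append_1, List.map_append, subword, subword]

theorem subword_one (y : ℕ → A) (i : ℕ) : subword y i 1 = [y i] := rfl

theorem take_drop_subword_zero (y : ℕ → A) {i m n : ℕ} (h : i + m ≤ n) :
    ((subword y 0 n).drop i).take m = subword y i m := by
  rw [subword, ← List.map_drop, ← List.map_take, List.drop_range',
    List.take_range'_of_length_ge (by omega), zero_add, mul_one, subword]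

theorem subword_append_eq_iff (y : ℕ → A) (i : ℕ) (u v : List A) :
    subword y i (u ++ v).length = u ++ v ↔
      subword y i u.length = u ∧ subword y (i + u.length) v.length = v := by
  rw [List.length_append, subword_add]
  exact ⟨fun h => List.append_inj h (length_subword y i u.length), fun ⟨hu, hv⟩ => by rw [hu, hv]⟩

theorem subword_eq_iff_getElem (y : ℕ → A) (i : ℕ) (u : List A) :
    subword y i u.length = u ↔ ∀ (r : ℕ) (h : r < u.length), y (i + r) = u[r] := by
  simp [subword, List.ext_getElem_iff]

theorem subword_eq_iff_getD [Inhabited A] (y : ℕ → A) (i : ℕ) (u : List A) :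
    subword y i u.length = u ↔ ∀ r, r < u.length → y (i + r) = u.getD r default := by
  rw [subword_eq_iff_getElem]
  exact forall₂_congr fun r hr => by rw [List.getD_eq_getElem _ _ hr]

variable [DecidableEq A]

/-- The indicator that the word `u` occurs in the sequence `y` at position `i`. -/
noncomputable def occurrence (y : ℕ → A) (u : List A) (i : ℕ) : ℝ :=
  if subword y i u.length = u then 1 else 0

theorem occurrence_nonneg (y : ℕ → A) (u : List A) (i : ℕ) : 0 ≤ occurrence y u i := by
  unfold occurrence; positivity

theorem occurrence_le_one (y : ℕ → A) (u : List A) (i : ℕ) : occurrence y u i ≤ 1 := by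
  unfold occurrence; split_ifs <;> norm_num

theorem occurrence_nil (y : ℕ → A) (i : ℕ) : occurrence y [] i = 1 := if_pos rfl

theorem occurrence_singleton (y : ℕ → A) (w : A) (i : ℕ) :
    occurrence y [w] i = if y i = w then 1 else 0 := by
  simp only [occurrence, List.length_singleton, subword_one, List.singleton_inj]

theorem occurrence_append (y : ℕ → A) (u v : List A) (i : ℕ) :
    occurrence y (u ++ v) i = occurrence y u i * occurrence y v (i + u.length) := by
  simp only [occurrence, subword_append_eq_iff, ite_and, ite_mul, one_mul, zero_mul]

variable [Fintype A]

theorem sum_occurrence_append_singleton (y : ℕ → A) (u : List A) (i : ℕ) :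
    ∑ a, occurrence y (u ++ [a]) i = occurrence y u i := by
  simp only [occurrence_append, occurrence_singleton, mul_ite, mul_one, mul_zero,
    Finset.sum_ite_eq, Finset.mem_univ, if_true]

theorem sum_occurrence_cons (y : ℕ → A) (u : List A) (i : ℕ) :
    ∑ a, occurrence y (a :: u) i = occurrence y u (i + 1) := by
  have hterm (a : A) :
      occurrence y (a :: u) i = if y i = a then occurrence y u (i + 1) else 0 := by
    rw [← List.singleton_append, occurrence_append, occurrence_singleton, List.length_singleton,
      ite_mul, one_mul, zero_mul]
  simp only [hterm, Finset.sum_ite_eq, Finset.mem_univ, if_true]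

end Subwords

section Equidistribution

theorem tendsto_average_succ_sub_average {a : ℕ → ℝ} {C : ℝ} (ha : ∀ i, |a i| ≤ C) :
    Tendsto (fun N : ℕ => (∑ i ∈ Finset.range N, a (i + 1)) / (N : ℝ) -
      (∑ i ∈ Finset.range N, a i) / (N : ℝ)) atTop (nhds 0) := by
  refine squeeze_zero_norm (fun N => ?_) (tendsto_const_div_atTop_nhds_zero_nat (C + C))
  rw [← sub_div, ← Finset.sum_sub_distrib, Finset.sum_range_sub, norm_div, Real.norm_natCast,
    Real.norm_eq_abs]
  gcongr
  exact (abs_sub _ _).trans (add_le_add (ha N) (ha 0))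

variable {A : Type*} [DecidableEq A]

/-- The frequency of the word `u` among the first `N` positions of the sequence `y`. -/
noncomputable def occurrenceFreq (y : ℕ → A) (u : List A) (N : ℕ) : ℝ :=
  (∑ i ∈ Finset.range N, occurrence y u i) / N

theorem occurrenceFreq_mem_Icc (y : ℕ → A) (u : List A) (N : ℕ) :
    occurrenceFreq y u N ∈ Set.Icc 0 1 := by
  refine ⟨div_nonneg (Finset.sum_nonneg fun i _ => occurrence_nonneg y u i) N.cast_nonneg,
    div_le_one_of_le₀ ?_ N.cast_nonneg⟩
  simpa using Finset.sum_le_card_nsmul (Finset.range N) _ 1 fun i _ => occurrence_le_one y u i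

/-- The indicator that `v` occurs at position `i` and is followed by the letter `w`, minus the
value `κ w v` predicted for it when `v` occurs. -/
noncomputable def innovation (κ : A → List A → ℝ) (v : List A) (w : A) (y : ℕ → A) (i : ℕ) : ℝ :=
  occurrence y (v ++ [w]) i - κ w v * occurrence y v i

theorem innovation_eq_mul (κ : A → List A → ℝ) (v : List A) (w : A) (y : ℕ → A) (i : ℕ) :
    innovation κ v w y i = occurrence y v i * (occurrence y [w] (i + v.length) - κ w v) := by
  rw [innovation, occurrence_append]
  ring

theorem abs_innovation_le (κ : A → List A → ℝ) (v : List A) (w : A) (y : ℕ → A) (i : ℕ) :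
    |innovation κ v w y i| ≤ 1 + |κ w v| := by
  have habs (u : List A) : |occurrence y u i| ≤ 1 := by
    rw [abs_of_nonneg (occurrence_nonneg y u i)]; exact occurrence_le_one y u i
  calc |innovation κ v w y i| ≤ |occurrence y (v ++ [w]) i| + |κ w v * occurrence y v i| :=
        abs_sub _ _
    _ ≤ 1 + |κ w v| := by
        rw [abs_mul]
        exact add_le_add (habs _) (mul_le_of_le_one_right (abs_nonneg _) (habs v))

variable [Fintype A] {y : ℕ → A} {k : ℕ} {κ : A → List A → ℝ}

theorem isStationaryWordWeight_of_tendsto {l : Filter ℕ} [l.NeBot] (hl : l ≤ atTop)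
    {f : List A → ℝ} (hf : ∀ u, Tendsto (occurrenceFreq y u) l (nhds (f u)))
    (hinn : ∀ v w, v.length = k → Tendsto (fun N : ℕ =>
      (∑ i ∈ Finset.range N, innovation κ v w y i) / (N : ℝ)) atTop (nhds 0)) :
    IsStationaryWordWeight k κ f where
  nil := by
    refine tendsto_nhds_unique ((hf []).congr' ?_) tendsto_const_nhds
    filter_upwards [hl (eventually_gt_atTop 0)] with N hN
    simp [occurrenceFreq, occurrence_nil, hN.ne']
  sum_append_singleton u := by
    refine tendsto_nhds_unique ((tendsto_finsetSum _ fun a _ => hf (u ++ [a])).congr fun N => ?_)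
      (hf u)
    simp only [occurrenceFreq, ← Finset.sum_div, Finset.sum_comm (s := Finset.univ),
      sum_occurrence_append_singleton]
  sum_cons u := by
    have hshift := (tendsto_average_succ_sub_average (a := occurrence y u) (C := 1) fun i => by
      rw [abs_of_nonneg (occurrence_nonneg y u i)]; exact occurrence_le_one y u i).mono_left hl
    refine tendsto_nhds_unique (tendsto_finsetSum _ fun a _ => hf (a :: u)) ?_
    rw [← zero_add (f u)]
    refine (hshift.add (hf u)).congr fun N => ?_
    simp only [occurrenceFreq, ← Finset.sum_div, Finset.sum_comm (s := Finset.univ),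
      sum_occurrence_cons, sub_add_cancel]
  append_singleton v w hv := by
    refine tendsto_nhds_unique (hf (v ++ [w])) ?_
    rw [← zero_add (κ w v * f v)]
    refine (((hinn v w hv).mono_left hl).add ((hf v).const_mul (κ w v))).congr fun N => ?_
    simp only [occurrenceFreq, innovation, Finset.sum_sub_distrib, ← Finset.mul_sum]
    ring

/-- By compactness it suffices to identify the limit along each ultrafilter, and along an
ultrafilter the frequencies of all words converge simultaneously. -/
theorem tendsto_occurrenceFreq [Nonempty A] (hpos : ∀ w v, v.length = k → 0 < κ w v)
    (hsum : ∀ w z, z.length + 1 = k → ∑ a, κ w (a :: z) = 1)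
    (hinn : ∀ v w, v.length = k → Tendsto (fun N : ℕ =>
      (∑ i ∈ Finset.range N, innovation κ v w y i) / (N : ℝ)) atTop (nhds 0))
    {u : List A} (hu : u.length ≤ k) :
    Tendsto (occurrenceFreq y u) atTop (nhds ((Fintype.card A : ℝ) ^ u.length)⁻¹) := by
  rw [tendsto_iff_ultrafilter]
  intro g hg
  have hlim (v : List A) : ∃ a, Tendsto (occurrenceFreq y v) g (nhds a) := by
    obtain ⟨a, -, ha⟩ := (isCompact_Icc (a := (0 : ℝ)) (b := 1)).ultrafilter_le_nhds'
      (g.map (occurrenceFreq y v)) (Ultrafilter.mem_map.2 (univ_mem' (occurrenceFreq_mem_Icc y v)))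
    exact ⟨a, ha⟩
  choose f hf using hlim
  rw [← (isStationaryWordWeight_of_tendsto hg hf hinn).eq_inv_card_pow hpos hsum hu]
  exact hf u

theorem tendsto_div_sub_of_tendsto_div {S : ℕ → ℝ} {L : ℝ} (ℓ : ℕ)
    (h : Tendsto (fun N : ℕ => S N / (N : ℝ)) atTop (nhds L)) :
    Tendsto (fun t : ℕ => S (t + 1 - ℓ) / ((t : ℝ) - ℓ)) atTop (nhds L) := by
  rw [← tendsto_add_atTop_iff_nat ℓ]
  have hratio : Tendsto (fun n : ℕ => ((n : ℝ) + 1) / n) atTop (nhds 1) := by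
    simpa only [inv_div, inv_one] using (tendsto_natCast_div_add_atTop (1 : ℝ)).inv₀ one_ne_zero
  have hprod := ((tendsto_add_atTop_iff_nat 1).2 h).mul hratio
  rw [mul_one] at hprod
  refine hprod.congr fun n => ?_
  rw [show n + ℓ + 1 - ℓ = n + 1 by omega]
  push_cast
  rw [add_sub_cancel_right, div_mul_div_cancel₀ (by positivity)]

end Equidistribution

section Prefixes

variable {A : Type*}

theorem prod_transition_append_singleton [Inhabited A] {k : ℕ} (κ : A → List A → ℝ) {x : List A}
    (w : A) (hx : k ≤ x.length) :
    ∏ j ∈ Finset.Ico k (x ++ [w]).length,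
        κ ((x ++ [w]).getD j default) (((x ++ [w]).drop (j - k)).take k) =
      (∏ j ∈ Finset.Ico k x.length, κ (x.getD j default) ((x.drop (j - k)).take k)) *
        κ w (x.drop (x.length - k)) := by
  have htake {j : ℕ} (hkj : k ≤ j) (hj : j ≤ x.length) :
      ((x ++ [w]).drop (j - k)).take k = (x.drop (j - k)).take k := by
    rw [List.drop_append_of_le_length (by omega),
      List.take_append_of_le_length (by rw [List.length_drop]; omega)]
  rw [List.length_append, List.length_singleton, Finset.prod_Ico_succ_top hx]
  congr 1
  · refine Finset.prod_congr rfl fun j hj => ?_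
    rw [Finset.mem_Ico] at hj
    rw [htake hj.1 hj.2.le, List.getD_append _ _ _ _ hj.2]
  · rw [htake hx le_rfl, List.getD_append_right _ _ _ _ le_rfl, Nat.sub_self,
      List.take_of_length_le (by rw [List.length_drop]; omega)]
    rfl

variable [DecidableEq A]

theorem exists_occurrence_eq_comp_subword (u : List A) {i n : ℕ} (h : i + u.length ≤ n) :
    ∃ F : List A → ℝ, ∀ y, occurrence y u i = F (subword y 0 n) :=
  ⟨fun p => if (p.drop i).take u.length = u then 1 else 0, fun y => by
    simp only [take_drop_subword_zero y h, occurrence]⟩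

theorem sum_mul_occurrence_zero [Finite A] (F : List A → ℝ) (y : ℕ → A) (n : ℕ) :
    ∑ x ∈ (List.finite_length_eq A n).toFinset, F x * occurrence y x 0 = F (subword y 0 n) := by
  have hmem : subword y 0 n ∈ (List.finite_length_eq A n).toFinset := by
    simp [length_subword]
  rw [Finset.sum_eq_single_of_mem _ hmem fun x hx hne => ?_]
  · rw [occurrence, length_subword, if_pos rfl, mul_one]
  · rw [Set.Finite.mem_toFinset, Set.mem_ofPred_eq] at hx
    rw [occurrence, hx, if_neg hne.symm, mul_zero]

theorem sum_occurrence_succ_eq_card [Inhabited A] (x : ℕ → A) (u : List A) (N : ℕ) :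
    ∑ i ∈ Finset.range N, occurrence (fun n => x (n + 1)) u i =
      ((Finset.Icc 1 N).filter
        (fun i => ∀ r, r < u.length → x (i + r) = u.getD r default)).card := by
  rw [Finset.card_filter, Nat.cast_sum, Finset.range_eq_Ico, ← Finset.Ico_add_one_right_eq_Icc,
    ← Finset.sum_Ico_add' _ 0 N 1]
  simp only [occurrence, subword_eq_iff_getD, Nat.cast_ite, Nat.cast_one, Nat.cast_zero,
    add_right_comm]

end Prefixes

section Markov

variable {A : Type*} {Ω : Type*} [MeasurableSpace Ω]

/-- The `k`-step Markov property of the process `Y` with transition probabilities `κ w v` from the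
last `k` letters `v` to the next letter `w`. It is multiplied out, so that nothing is required
after a prefix of probability zero. -/
def IsMarkovOfOrder (P : Measure Ω) (Y : ℕ → Ω → A) (k : ℕ) (κ : A → List A → ℝ) : Prop :=
  ∀ (x : List A) (w : A), k ≤ x.length →
    P.real {ω | subword (Y · ω) 0 (x ++ [w]).length = x ++ [w]} =
      κ w (x.drop (x.length - k)) * P.real {ω | subword (Y · ω) 0 x.length = x}

variable {P : Measure Ω} {Y : ℕ → Ω → A}

theorem isMarkovOfOrder_of_prod [Inhabited A] {k : ℕ} {κ : A → List A → ℝ} {ν : List A → ℝ}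
    (hprod : ∀ x : List A, k ≤ x.length → P.real {ω | subword (Y · ω) 0 x.length = x} =
      ν (x.take k) *
        ∏ j ∈ Finset.Ico k x.length, κ (x.getD j default) ((x.drop (j - k)).take k)) :
    IsMarkovOfOrder P Y k κ := fun x w hx => by
  rw [hprod x hx, hprod (x ++ [w]) (by rw [List.length_append]; omega),
    prod_transition_append_singleton κ w hx, List.take_append_of_le_length hx]
  ring

variable [MeasurableSpace A] [MeasurableSingletonClass A]

theorem measurableSet_subword_eq (hY : ∀ n, Measurable (Y n)) (i : ℕ) (u : List A) :
    MeasurableSet {ω | subword (Y · ω) i u.length = u} := by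
  simp only [subword_eq_iff_getElem, Set.ofPred_forall]
  exact .iInter fun r => .iInter fun _ => hY (i + r) (measurableSet_singleton _)

variable [DecidableEq A]

theorem measurable_occurrence (hY : ∀ n, Measurable (Y n)) (u : List A) (i : ℕ) :
    Measurable fun ω => occurrence (Y · ω) u i :=
  .ite (measurableSet_subword_eq hY i u) measurable_const measurable_const

theorem integral_occurrence (hY : ∀ n, Measurable (Y n)) (u : List A) (i : ℕ) :
    ∫ ω, occurrence (Y · ω) u i ∂P = P.real {ω | subword (Y · ω) i u.length = u} := by
  rw [← integral_indicator_one (measurableSet_subword_eq hY i u)]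
  simp only [occurrence, Set.indicator_apply, Set.mem_ofPred_eq, Pi.one_apply]

variable [IsFiniteMeasure P]

theorem integrable_occurrence (hY : ∀ n, Measurable (Y n)) (u : List A) (i : ℕ) :
    Integrable (fun ω => occurrence (Y · ω) u i) P :=
  .of_bound (measurable_occurrence hY u i).aestronglyMeasurable 1 <| ae_of_all _ fun ω => by
    rw [Real.norm_of_nonneg (occurrence_nonneg _ u i)]; exact occurrence_le_one _ u i

namespace IsMarkovOfOrder

variable {k : ℕ} {κ : A → List A → ℝ}

section Finite

variable [Finite A]

theorem integral_mul_occurrence_sub (hmarkov : IsMarkovOfOrder P Y k κ)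
    (hY : ∀ n, Measurable (Y n)) (F : List A → ℝ) (w : A) {n : ℕ} (hn : k ≤ n) :
    ∫ ω, F (subword (Y · ω) 0 n) *
      (occurrence (Y · ω) [w] n - κ w ((subword (Y · ω) 0 n).drop (n - k))) ∂P = 0 := by
  have hexpand (ω : Ω) : F (subword (Y · ω) 0 n) *
      (occurrence (Y · ω) [w] n - κ w ((subword (Y · ω) 0 n).drop (n - k))) =
      ∑ x ∈ (List.finite_length_eq A n).toFinset, F x *
        (occurrence (Y · ω) (x ++ [w]) 0 - κ w (x.drop (n - k)) * occurrence (Y · ω) x 0) := by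
    rw [← sum_mul_occurrence_zero
      (fun x => F x * (occurrence (Y · ω) [w] n - κ w (x.drop (n - k))))]
    refine Finset.sum_congr rfl fun x hx => ?_
    rw [Set.Finite.mem_toFinset, Set.mem_ofPred_eq] at hx
    rw [occurrence_append, hx, zero_add]
    ring
  have hintegrable (x : List A) : Integrable (fun ω => occurrence (Y · ω) x 0) P :=
    integrable_occurrence hY x 0
  have hintegrable_term (x : List A) : Integrable (fun ω => F x *
      (occurrence (Y · ω) (x ++ [w]) 0 - κ w (x.drop (n - k)) * occurrence (Y · ω) x 0)) P :=
    ((hintegrable _).sub ((hintegrable _).const_mul _)).const_mul _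
  simp_rw [hexpand]
  rw [integral_finsetSum _ fun x _ => hintegrable_term x]
  refine Finset.sum_eq_zero fun x hx => ?_
  rw [Set.Finite.mem_toFinset, Set.mem_ofPred_eq] at hx
  subst hx
  rw [integral_const_mul, integral_sub (hintegrable _) ((hintegrable _).const_mul _),
    integral_const_mul, integral_occurrence hY, integral_occurrence hY, hmarkov x w hn, sub_self,
    mul_zero]

theorem integral_innovation_mul_innovation (hmarkov : IsMarkovOfOrder P Y k κ)
    (hY : ∀ n, Measurable (Y n)) {v : List A} (hv : v.length = k) (w : A) {i j : ℕ} (hij : i < j) :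
    ∫ ω, innovation κ v w (Y · ω) i * innovation κ v w (Y · ω) j ∂P = 0 := by
  obtain ⟨F, hF⟩ := exists_occurrence_eq_comp_subword (n := j + k) (i := i) (v ++ [w])
    (by rw [List.length_append, List.length_singleton]; omega)
  obtain ⟨G, hG⟩ := exists_occurrence_eq_comp_subword (n := j + k) (i := i) v (by omega)
  rw [← hmarkov.integral_mul_occurrence_sub hY (fun p => (F p - κ w v * G p) *
    if p.drop j = v then 1 else 0) w (Nat.le_add_left k j)]
  refine integral_congr_ae (ae_of_all _ fun ω => ?_)
  have hdrop : (subword (Y · ω) 0 (j + k)).drop j = subword (Y · ω) j k := by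
    rw [subword_add, List.drop_left' (length_subword _ _ _), zero_add]
  simp only [innovation_eq_mul κ v w _ j, hv, Nat.add_sub_cancel, hdrop]
  rw [innovation, hF, hG, occurrence, hv]
  split_ifs with h
  · rw [h]; ring
  · ring

theorem ae_tendsto_average_innovation (hmarkov : IsMarkovOfOrder P Y k κ)
    (hY : ∀ n, Measurable (Y n)) {v : List A} (hv : v.length = k) (w : A) :
    ∀ᵐ ω ∂P, Tendsto (fun N : ℕ =>
      (∑ i ∈ Finset.range N, innovation κ v w (Y · ω) i) / (N : ℝ)) atTop (nhds 0) := by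
  have hmeas (i : ℕ) : Measurable fun ω => innovation κ v w (Y · ω) i :=
    (measurable_occurrence hY _ i).sub ((measurable_occurrence hY v i).const_mul _)
  refine ae_tendsto_average_of_orthogonal (D := fun i ω => innovation κ v w (Y · ω) i)
    (C := (1 + |κ w v|) ^ 2 * P.real Set.univ)
    (fun i => .of_bound (hmeas i).aestronglyMeasurable (1 + |κ w v|)
      (ae_of_all _ fun ω => abs_innovation_le κ v w _ i)) (fun i => ?_) fun i j hij => ?_
  · refine (Real.le_norm_self _).trans (norm_integral_le_of_norm_le_const (ae_of_all _ fun ω => ?_))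
    rw [norm_pow]
    exact pow_le_pow_left₀ (norm_nonneg _) (abs_innovation_le κ v w _ i) 2
  · obtain h | h := hij.lt_or_gt
    · exact hmarkov.integral_innovation_mul_innovation hY hv w h
    · simp_rw [mul_comm (innovation κ v w _ i)]
      exact hmarkov.integral_innovation_mul_innovation hY hv w h

end Finite

theorem ae_tendsto_occurrenceFreq [Fintype A] [Nonempty A] (hmarkov : IsMarkovOfOrder P Y k κ)
    (hY : ∀ n, Measurable (Y n)) (hpos : ∀ w v, v.length = k → 0 < κ w v)
    (hsum : ∀ w z, z.length + 1 = k → ∑ a, κ w (a :: z) = 1) :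
    ∀ᵐ ω ∂P, ∀ u : List A, u.length ≤ k →
      Tendsto (occurrenceFreq (Y · ω) u) atTop (nhds ((Fintype.card A : ℝ) ^ u.length)⁻¹) := by
  have hinn : ∀ᵐ ω ∂P, ∀ v w, v.length = k → Tendsto (fun N : ℕ =>
      (∑ i ∈ Finset.range N, innovation κ v w (Y · ω) i) / (N : ℝ)) atTop (nhds 0) := by
    simp only [ae_all_iff]
    exact fun v w hv => hmarkov.ae_tendsto_average_innovation hY hv w
  filter_upwards [hinn] with ω hω u hu using tendsto_occurrenceFreq hpos hsum hω hu

end IsMarkovOfOrder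

end Markov

section TwoFaced

theorem tb0_eq_one_sub_tf0 (π : ℝ) (u : List Bool) : tb0 π u = 1 - tf0 π u := by
  induction u with
  | nil => norm_num [tf0, tb0]
  | cons a u ih =>
    obtain _ | ⟨b, u⟩ := u <;> cases a <;> simp only [tf0, tb0, sub_sub_cancel, ih]

theorem tf0_mem_Ioo {π : ℝ} (hπ : π ∈ Set.Ioo (0 : ℝ) 1) (u : List Bool) :
    tf0 π u ∈ Set.Ioo (0 : ℝ) 1 := by
  rw [Set.mem_Ioo] at hπ ⊢
  induction u with
  | nil => norm_num [tf0]
  | cons a u ih =>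
    obtain _ | ⟨b, u⟩ := u <;> cases a <;> simp only [tf0, tb0_eq_one_sub_tf0] <;>
      constructor <;> linarith

theorem tf0_cons_false_add_cons_true (π : ℝ) (u : List Bool) :
    tf0 π (false :: u) + tf0 π (true :: u) = 1 := by
  obtain _ | ⟨b, u⟩ := u <;> simp only [tf0, tb0_eq_one_sub_tf0, add_sub_cancel]

variable {π : ℝ} {κ : Bool → List Bool → ℝ}

theorem twoFaced_pos (hπ : π ∈ Set.Ioo (0 : ℝ) 1) (hκ : κ = tface π ∨ κ = tbarface π) (w : Bool)
    (u : List Bool) : 0 < κ w u := by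
  obtain ⟨h0, h1⟩ := tf0_mem_Ioo hπ u
  obtain rfl | rfl := hκ <;> cases w <;>
    simp [tface, tbarface, tb0_eq_one_sub_tf0, h0, h1]

theorem sum_twoFaced_cons (hκ : κ = tface π ∨ κ = tbarface π) (w : Bool) (u : List Bool) :
    ∑ a, κ w (a :: u) = 1 := by
  have h := tf0_cons_false_add_cons_true π u
  rw [Fintype.sum_bool]
  obtain rfl | rfl := hκ <;> cases w <;>
    simp only [tface, tbarface, tb0_eq_one_sub_tf0, if_true, Bool.false_eq_true, if_false] <;>
    linarith

end TwoFaced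

theorem two_faced_frequencies_ae_general {A : Type*} [Fintype A] [DecidableEq A] [Inhabited A]
    [MeasurableSpace A] [MeasurableSingletonClass A] {Ω : Type*} [MeasurableSpace Ω]
    (P : Measure Ω) [IsFiniteMeasure P] (k : ℕ) (κ : A → List A → ℝ)
    (hpos : ∀ w v, v.length = k → 0 < κ w v)
    (hsum : ∀ w z, z.length + 1 = k → ∑ a, κ w (a :: z) = 1)
    (ν : List A → ℝ) (X : ℕ → Ω → A) (hX : ∀ n, Measurable (X n))
    (hproc : ∀ x : List A, k ≤ x.length →
      (P {ω | ∀ i, i < x.length → X (1 + i) ω = x.getD i default}).toReal =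
        ν (x.take k) *
          ∏ j ∈ Finset.Ico k x.length, κ (x.getD j default) ((x.drop (j - k)).take k)) :
    ∀ᵐ ω ∂P, ∀ u : List A, u.length ≤ k →
      Tendsto (fun t : ℕ =>
          (((Finset.Icc 1 (t + 1 - u.length)).filter
              (fun i => ∀ r, r < u.length → X (i + r) ω = u.getD r default)).card : ℝ) /
            ((t : ℝ) - (u.length : ℝ)))
        atTop (nhds (((Fintype.card A : ℝ) ^ u.length)⁻¹)) := by
  have hmarkov : IsMarkovOfOrder P (fun n => X (n + 1)) k κ :=
    isMarkovOfOrder_of_prod fun x hx => by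
      simpa only [Measure.real, subword_eq_iff_getD, zero_add, add_comm 1] using hproc x hx
  filter_upwards [hmarkov.ae_tendsto_occurrenceFreq (fun n => hX (n + 1)) hpos hsum] with ω hω u hu
  refine (tendsto_div_sub_of_tendsto_div u.length (hω u hu)).congr fun t => ?_
  rw [sum_occurrence_succ_eq_card (X · ω)]

/-- for the process `T(k,π)` (or `T̄(k,π)`) with an arbitrary initial
distribution, with probability one, for every binary word `u` with `1 ≤ |u| ≤ k` the
frequency `ν_t(u)/(t - |u|)` of occurrences of `u` among
`X_1…X_{|u|}, X_2…X_{|u|+1}, …, X_{t-|u|+1}…X_t` tends to `2^{-|u|}` as `t → ∞`. -/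
theorem two_faced_frequencies_ae {Ω : Type*} [MeasurableSpace Ω]
    (P : Measure Ω) [IsProbabilityMeasure P]
    (k : ℕ) (hk : 1 ≤ k) (π : ℝ) (hπ : π ∈ Set.Ioo (0 : ℝ) 1)
    (κ : Bool → List Bool → ℝ) (hκ : κ = tface π ∨ κ = tbarface π)
    (ν : List Bool → ℝ)
    (X : ℕ → Ω → Bool) (hX : ∀ n, Measurable (X n))
    (hproc : ∀ x : List Bool, k ≤ x.length →
      (P {ω | ∀ i, i < x.length → X (1 + i) ω = x.getD i false}).toReal =
        ν (x.take k) *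
          ∏ j ∈ Finset.Ico k x.length, κ (x.getD j false) ((x.drop (j - k)).take k)) :
    ∀ᵐ ω ∂P, ∀ u : List Bool, 1 ≤ u.length → u.length ≤ k →
      Tendsto (fun t : ℕ =>
          (((Finset.Icc 1 (t + 1 - u.length)).filter
              (fun i => ∀ r, r < u.length → X (i + r) ω = u.getD r false)).card : ℝ) /
            ((t : ℝ) - (u.length : ℝ)))
        atTop (nhds (((2 : ℝ) ^ u.length)⁻¹)) := by
  filter_upwards [two_faced_frequencies_ae_general P k κ (fun w v _ => twoFaced_pos hπ hκ w v)
    (fun w z _ => sum_twoFaced_cons hκ w z) ν X hX hproc] with ω hω u _ hu using hω u hu
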